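/- arXiv:2509.20144 — 5 statements merged into one kernel-verified Lean document; each statement's English description precedes it below -/
import Mathlib

section
/- Let G be a finite group and X a cohomological Mackey functor for G. Then the six-term sequence 0 → c₁(G,X) → Ĥ⁻¹(G,X₁) → k⁰(G,X) → c₀(G,X) → Ĥ⁰(G,X₁) → k¹(G,X) → 0 is exact, where Ĥ⁻¹(G,X₁) := ker(x ↦ ∑_{g∈G} g•x) / ω_G X₁ and Ĥ⁰(G,X₁) := X₁^G / {∑_{g∈G} g•x : x ∈ X₁}, and the maps are: the map induced by the inclusion ker N ⊆ ker(x ↦ ∑_g g•x) (valid since I∘N equals the map x ↦ ∑_g g•x); the map induced by N (which sends ker(x ↦ ∑_g g•x) into ker I, since N(x') ∈ ker I whenever ∑_g g•x' = I(N(x')) = 0); the composite of the inclusion ker I ⊆ X_G with the projection X_G → c₀(G,X); the map induced by I (well defined since I(N(x)) = ∑_g g•x); and the projection induced by the identity of X₁^G (valid since {∑_g g•x} ⊆ I(X_G)). -/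
/-- Let `G` be a finite group and `X` a cohomological Mackey functor for `G`.
Then the six-term sequence
`0 → c₁(G,X) → Ĥ⁻¹(G,X₁) → k⁰(G,X) → c₀(G,X) → Ĥ⁰(G,X₁) → k¹(G,X) → 0`
is exact.  Here `Ĥ⁻¹(G,X₁) = ker(x ↦ ∑_g g•x) ⧸ ω_G X₁`, `Ĥ⁰(G,X₁) = X₁^G ⧸ {∑_g g•x}`,
`c₁ = ker N ⧸ ω_G X₁`, `k⁰ = ker I`, `c₀ = X_G ⧸ N(X₁)`, `k¹ = X₁^G ⧸ I(X_G)`, and the maps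
are as described.  Exactness is expressed elementwise on representatives:
each clause below states exactness at one node of the sequence. -/
theorem sixTerm_exact
    (G : Type*) [Group G] [Fintype G]
    (X1 XG : Type*) [AddCommGroup X1] [AddCommGroup XG] [DistribMulAction G X1]
    (N : X1 →+ XG) (I : XG →+ X1)
    (hN : ∀ (g : G) (x : X1), N (g • x) = N x)
    (hI : ∀ (g : G) (y : XG), g • I y = I y)
    (hIN : ∀ x : X1, I (N x) = ∑ g : G, g • x)
    (hNI : ∀ y : XG, N (I y) = Fintype.card G • y)
    (ω : AddSubgroup X1)
    (hω : ω = AddSubgroup.closure {z : X1 | ∃ (g : G) (x : X1), z = x - g • x}) :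
    -- exactness at `c₁(G,X)`: the map `c₁ → Ĥ⁻¹` induced by `ker N ⊆ ker(x ↦ ∑ g • x)`
    -- is injective
    (∀ x : X1, N x = 0 → x ∈ ω → x ∈ ω) ∧
    -- exactness at `Ĥ⁻¹(G,X₁)`: the class of `x ∈ ker(∑ g • ·)` maps to `0 = N x` in `k⁰`
    -- iff it comes from a class in `c₁`, i.e. differs by `ω_G X₁` from an element of `ker N`
    (∀ x : X1, (∑ g : G, g • x) = 0 →
      (N x = 0 ↔ ∃ x' : X1, N x' = 0 ∧ x - x' ∈ ω)) ∧
    -- exactness at `k⁰(G,X)`: `y ∈ ker I` dies in `c₀ = X_G ⧸ N(X₁)` iff it is `N x`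
    -- for some `x` with `∑ g • x = 0`
    (∀ y : XG, I y = 0 →
      ((∃ x : X1, N x = y) ↔ ∃ x : X1, (∑ g : G, g • x) = 0 ∧ N x = y)) ∧
    -- exactness at `c₀(G,X)`: the class of `y` dies in `Ĥ⁰` (i.e. `I y ∈ {∑ g • x}`)
    -- iff `y` differs by `N(X₁)` from an element of `ker I`
    (∀ y : XG,
      ((∃ x : X1, I y = ∑ g : G, g • x) ↔ ∃ y' : XG, I y' = 0 ∧ y - y' ∈ N.range)) ∧
    -- exactness at `Ĥ⁰(G,X₁)`: the class of `x ∈ X₁^G` dies in `k¹` (i.e. `x ∈ I(X_G)`)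
    -- iff `x` differs by `{∑ g • x'}` from an element `I y` of the image of `c₀ → Ĥ⁰`
    (∀ x : X1, (∀ g : G, g • x = x) →
      (x ∈ I.range ↔ ∃ (y : XG) (x' : X1), x - I y = ∑ g : G, g • x')) ∧
    -- exactness at `k¹(G,X)`: the map `Ĥ⁰ → k¹` induced by the identity of `X₁^G`
    -- is surjective
    (∀ x : X1, (∀ g : G, g • x = x) →
      ∃ x' : X1, (∀ g : G, g • x' = x') ∧ x - x' ∈ I.range) := by
  have hωN : ∀ z ∈ ω, N z = 0 := by
    intro z hz
    have hle : ω ≤ N.ker := by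
      rw [hω, AddSubgroup.closure_le]
      rintro _ ⟨g, x, rfl⟩
      simp [AddMonoidHom.mem_ker, hN]
    exact hle hz
  refine ⟨fun x _ h => h, ?_, ?_, ?_, ?_, ?_⟩
  · intro x _
    constructor
    · intro h
      exact ⟨x, h, by simp⟩
    · rintro ⟨x', hx', hd⟩
      have h := hωN _ hd
      rwa [map_sub, hx', sub_zero] at h
  · intro y hy
    constructor
    · rintro ⟨x, rfl⟩
      exact ⟨x, by rw [← hIN, hy], rfl⟩
    · rintro ⟨x, _, h⟩
      exact ⟨x, h⟩
  · intro y
    constructor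
    · rintro ⟨x, hx⟩
      exact ⟨y - N x, by rw [map_sub, hIN, hx, sub_self], x, by abel⟩
    · rintro ⟨y', hy', x, hx⟩
      refine ⟨x, ?_⟩
      rw [← hIN, hx, map_sub, hy', sub_zero]
  · intro x _
    constructor
    · rintro ⟨y, rfl⟩
      exact ⟨y, 0, by simp⟩
    · rintro ⟨y, x', h⟩
      refine ⟨y + N x', ?_⟩
      rw [map_add, hIN, ← h]
      abel
  · intro x hx
    exact ⟨x, hx, by simp⟩
end

section
/- Let p be a prime and let n, k be natural numbers. If k ≥ n, then the number of n × k matrices over the field 𝔽_p = ℤ/pℤ whose rank equals n is ∏_{i=0}^{n-1} (p^k − p^i); equivalently, the proportion of full-rank matrices among all p^{n·k} matrices in 𝔽_p^{n×k} equals ∏_{i=0}^{n-1} (1 − p^{i−k}). If k < n, then no n × k matrix over 𝔽_p has rank n. -/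
/-- Let `p` be a prime and `n, k` natural numbers.  If `k ≥ n`, the number
of `n × k` matrices over `𝔽_p = ZMod p` of rank `n` is `∏_{i=0}^{n-1} (p^k - p^i)`;
equivalently, the proportion of full-rank matrices among all `p^{n·k}` matrices equals
`∏_{i=0}^{n-1} (1 - p^{i-k})`.  If `k < n`, no `n × k` matrix over `𝔽_p` has rank `n`. -/
theorem card_fullRank_matrices (p n k : ℕ) (hp : p.Prime) :
    (k ≥ n →
      Nat.card {A : Matrix (Fin n) (Fin k) (ZMod p) // A.rank = n} =
        ∏ i ∈ Finset.range n, (p ^ k - p ^ i)) ∧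
    (k ≥ n →
      (Nat.card {A : Matrix (Fin n) (Fin k) (ZMod p) // A.rank = n} : ℝ) / (p : ℝ) ^ (n * k) =
        ∏ i ∈ Finset.range n, (1 - (p : ℝ) ^ ((i : ℤ) - (k : ℤ)))) ∧
    (k < n → ∀ A : Matrix (Fin n) (Fin k) (ZMod p), A.rank ≠ n) := by
  haveI : Fact p.Prime := ⟨hp⟩
  have hp0 : (p : ℝ) ≠ 0 := by exact_mod_cast hp.ne_zero
  have h1 : k ≥ n →
      Nat.card {A : Matrix (Fin n) (Fin k) (ZMod p) // A.rank = n} =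
        ∏ i ∈ Finset.range n, (p ^ k - p ^ i) := by
    intro hk
    have e : {A : Matrix (Fin n) (Fin k) (ZMod p) // A.rank = n} ≃
        {s : Fin n → (Fin k → ZMod p) // LinearIndependent (ZMod p) s} :=
      Equiv.subtypeEquiv (Equiv.refl _) (fun A => by
        rw [linearIndependent_iff_card_eq_finrank_span, Set.finrank,
          Matrix.rank_eq_finrank_span_row, Fintype.card_fin]
        exact eq_comm)
    rw [Nat.card_congr e, card_linearIndependent (by simpa using hk), Finset.prod_range]
    simp [ZMod.card]
  refine ⟨h1, ?_, ?_⟩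
  · intro hk
    rw [h1 hk, Nat.cast_prod, mul_comm n k, pow_mul]
    have h2 : ((p : ℝ) ^ k) ^ n = ∏ _i ∈ Finset.range n, (p : ℝ) ^ k := by simp
    rw [h2, ← Finset.prod_div_distrib]
    refine Finset.prod_congr rfl fun i hi => ?_
    have hik : i ≤ k := (Finset.mem_range.mp hi).le.trans hk
    rw [Nat.cast_sub (Nat.pow_le_pow_right hp.pos hik), zpow_sub₀ hp0]
    push_cast
    rw [sub_div, div_self (pow_ne_zero _ hp0)]
    simp
  · intro hk A hA
    have := A.rank_le_width
    omega
end

section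
/- Let n ≥ 1 and k be natural numbers with k > n. Then there exists a constant C (depending only on n and k) such that for every real number x, the sum over all primes p ≤ x of (1 − ∏_{i=0}^{n-1} (1 − p^{i−k})) is at most C. In other words, with P_{n,k}(x) modeling the number of primes p ≤ x for which a uniform random n×k matrix over 𝔽_p fails to have rank n, the expected value E[P_{n,k}(x)] = ∑_{p ≤ x prime} (1 − ∏_{i=0}^{n-1}(1 − p^{i−k})) is O(1). -/
theorem aux_weierstrass (a : ℕ → ℝ) (c : ℝ) (n : ℕ)
    (h : ∀ i < n, 0 ≤ a i ∧ a i ≤ c ∧ a i ≤ 1) :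
    0 ≤ ∏ i ∈ Finset.range n, (1 - a i) ∧ ∏ i ∈ Finset.range n, (1 - a i) ≤ 1 ∧
      1 - ∏ i ∈ Finset.range n, (1 - a i) ≤ n * c := by
  induction n with
  | zero => simp
  | succ m ih =>
    obtain ⟨h0, h1, h2⟩ := ih (fun i hi => h i (by omega))
    obtain ⟨g0, g1, g2⟩ := h m (by omega)
    rw [Finset.prod_range_succ]
    set P := ∏ i ∈ Finset.range m, (1 - a i)
    push_cast
    refine ⟨mul_nonneg h0 (by linarith), by nlinarith, by nlinarith⟩

/-- Let `n ≥ 1` and `k > n` be natural numbers.  Then there is a constant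
`C` (depending only on `n` and `k`) such that for every real `x`, the sum over all primes
`p ≤ x` of `1 - ∏_{i=0}^{n-1} (1 - p^{i-k})` is at most `C`; i.e. the expected number
`E[P_{n,k}(x)]` of primes `p ≤ x` for which a uniform random `n × k` matrix over `𝔽_p`
fails to have full rank `n` is `O(1)`. -/
theorem expected_rank_failures_bounded (n k : ℕ) (hn : 1 ≤ n) (hk : n < k) :
    ∃ C : ℝ, ∀ x : ℝ,
      ∑ p ∈ (Finset.range (⌊x⌋₊ + 1)).filter Nat.Prime,
        (1 - ∏ i ∈ Finset.range n, (1 - (p : ℝ) ^ ((i : ℤ) - (k : ℤ)))) ≤ C := by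
  have hs : Summable (fun p : ℕ => (n : ℝ) * (1 / (p : ℝ) ^ 2)) :=
    (Real.summable_one_div_nat_pow.mpr (by norm_num)).mul_left _
  refine ⟨∑' p : ℕ, (n : ℝ) * (1 / (p : ℝ) ^ 2), fun x => ?_⟩
  refine le_trans (Finset.sum_le_sum (fun p hp => ?_))
    (hs.sum_le_tsum ((Finset.range (⌊x⌋₊ + 1)).filter Nat.Prime) (fun p _ => by positivity))
  have hp1 : (1 : ℝ) ≤ p := by
    exact_mod_cast (Finset.mem_filter.mp hp).2.one_lt.le
  refine (aux_weierstrass (fun i => (p : ℝ) ^ ((i : ℤ) - (k : ℤ))) _ n (fun i hi => ?_)).2.2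
  refine ⟨by positivity, ?_, zpow_le_one_of_nonpos₀ hp1 (by omega)⟩
  have h2 : (1 / (p : ℝ) ^ 2) = (p : ℝ) ^ (-2 : ℤ) := by
    rw [zpow_neg, one_div]; norm_cast
  rw [h2]
  exact zpow_le_zpow_right₀ hp1 (by omega)
end

section
/- Let K be a number field with ring of integers O_K, let ℓ be a prime number, and let Y := {α ∈ K^× : the principal fractional ideal (α) is the ℓ-th power of some nonzero fractional ideal of O_K}. Then the quotient group Y / K^{×ℓ} is finite. -/
open NumberField nonZeroDivisors

theorem unit_of_principal_eq_one (K : Type*) [Field K] [NumberField K] (g : Kˣ)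
    (hg : toPrincipalIdeal (𝓞 K) K g = 1) :
    ∃ u : (𝓞 K)ˣ, Units.map (algebraMap (𝓞 K) K : 𝓞 K →* K) u = g := by
  have key : ∀ g : Kˣ, toPrincipalIdeal (𝓞 K) K g = 1 → ∃ x : 𝓞 K, algebraMap (𝓞 K) K x = g := by
    intro g hg
    have h1 := congrArg Units.val hg
    rw [coe_toPrincipalIdeal, Units.val_one] at h1
    have h2 : (g : K) ∈ FractionalIdeal.spanSingleton (𝓞 K)⁰ (g : K) :=
      FractionalIdeal.mem_spanSingleton_self _ _
    rw [h1, FractionalIdeal.mem_one_iff] at h2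
    exact h2
  obtain ⟨x, hx⟩ := key g hg
  obtain ⟨y, hy⟩ := key g⁻¹ (by rw [map_inv, hg, inv_one])
  have hxy : x * y = 1 := by
    apply FaithfulSMul.algebraMap_injective (𝓞 K) K
    rw [map_mul, hx, hy, map_one, Units.mul_inv]
  refine ⟨⟨x, y, hxy, by rw [mul_comm, hxy]⟩, Units.ext ?_⟩
  exact hx

theorem comm_aux {G : Type*} [CommGroup G] (w u B z : G) :
    w⁻¹ * u * B = z⁻¹ * w⁻¹ * (z * u * B) := by
  rw [mul_comm z⁻¹, mul_assoc w⁻¹ z⁻¹, mul_assoc z, inv_mul_cancel_left, mul_assoc]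

/-- Let `K` be a number field, `ℓ` a prime, and
`Y = {α ∈ K^× : (α) = 𝔞^ℓ for some nonzero fractional ideal 𝔞 of O_K}`.
Then `Y / K^{×ℓ}` is finite. -/
theorem selmer_quotient_finite (K : Type*) [Field K] [NumberField K] (ℓ : ℕ) (hℓ : ℓ.Prime)
    (Y : Subgroup Kˣ)
    (hY : (Y : Set Kˣ) = {α : Kˣ | ∃ I : (FractionalIdeal (𝓞 K)⁰ K)ˣ,
        I ^ ℓ = toPrincipalIdeal (𝓞 K) K α}) :
    Finite (Y ⧸ ((powMonoidHom ℓ : Kˣ →* Kˣ).range.subgroupOf Y)) := by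
  classical
  have hmem : ∀ α : Kˣ, α ∈ Y ↔ ∃ I : (FractionalIdeal (𝓞 K)⁰ K)ˣ,
      I ^ ℓ = toPrincipalIdeal (𝓞 K) K α := fun α => by
    rw [← SetLike.mem_coe, hY]; rfl
  have hC : Finite ((FractionalIdeal (𝓞 K)⁰ K)ˣ ⧸ (toPrincipalIdeal (𝓞 K) K).range) :=
    Finite.of_equiv _ (ClassGroup.equiv (R := 𝓞 K) K).toEquiv
  have hfg : Group.FG (𝓞 K)ˣ := Group.fg_iff_monoid_fg.mpr inferInstance
  have hU : Finite ((𝓞 K)ˣ ⧸ (powMonoidHom ℓ : (𝓞 K)ˣ →* (𝓞 K)ˣ).range) := by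
    have := Subgroup.finiteIndex_range_powMonoidHom_of_fg (𝓞 K)ˣ hℓ.ne_zero
    infer_instance
  choose I hI using fun y : Y => (hmem y).1 y.2
  let c : Y → ((FractionalIdeal (𝓞 K)⁰ K)ˣ ⧸ (toPrincipalIdeal (𝓞 K) K).range) :=
    fun y => QuotientGroup.mk (I y)
  -- fibres: choose a representative of each class that occurs
  let φ : (𝓞 K)ˣ →* Kˣ := Units.map (algebraMap (𝓞 K) K : 𝓞 K →* K)
  let f : Set.range c × ((𝓞 K)ˣ ⧸ (powMonoidHom ℓ : (𝓞 K)ˣ →* (𝓞 K)ˣ).range) →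
      Kˣ ⧸ (powMonoidHom ℓ : Kˣ →* Kˣ).range :=
    fun p => QuotientGroup.mk (((p.1.2.choose : Y) : Kˣ) * φ p.2.out)
  let g : (Y ⧸ ((powMonoidHom ℓ : Kˣ →* Kˣ).range.subgroupOf Y)) →
      Kˣ ⧸ (powMonoidHom ℓ : Kˣ →* Kˣ).range :=
    QuotientGroup.map _ _ Y.subtype (fun x hx => hx)
  have hg : Function.Injective g := by
    intro a b
    induction a using QuotientGroup.induction_on with | _ a
    induction b using QuotientGroup.induction_on with | _ b
    intro h
    have h' := QuotientGroup.eq.1 h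
    exact QuotientGroup.eq.2 h'
  have hsub : Set.range g ⊆ Set.range f := by
    rintro _ ⟨a, rfl⟩
    induction a using QuotientGroup.induction_on with | _ y
    let r : Set.range c := ⟨c y, y, rfl⟩
    have hr : c r.2.choose = c y := r.2.choose_spec
    set z : Y := r.2.choose with hz
    obtain ⟨b, hb⟩ := QuotientGroup.eq.1 hr
    obtain ⟨u, hu⟩ := unit_of_principal_eq_one K ((z : Kˣ)⁻¹ * y * (b ^ ℓ)⁻¹) (by
      rw [map_mul, map_mul, map_inv, map_inv, map_pow, hb, ← hI, ← hI, mul_pow, inv_pow]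
      group)
    obtain ⟨v, hv⟩ := QuotientGroup.eq.1 (QuotientGroup.out_eq'
      (QuotientGroup.mk u : (𝓞 K)ˣ ⧸ (powMonoidHom ℓ : (𝓞 K)ˣ →* (𝓞 K)ˣ).range))
    refine ⟨(r, QuotientGroup.mk u), ?_⟩
    refine QuotientGroup.eq.2 ⟨φ v * b, ?_⟩
    have hv' := congrArg φ hv
    simp only [powMonoidHom_apply, map_pow, map_mul, map_inv] at hv'
    change (φ v * b) ^ ℓ = ((z : Kˣ) * φ (Quotient.out _))⁻¹ * (y : Kˣ)
    have hy : (y : Kˣ) = z * φ u * b ^ ℓ := by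
      change φ u = _ at hu
      rw [hu]; simp [mul_assoc]
    rw [mul_pow, hv', hy, mul_inv]
    exact comm_aux _ _ _ _
  have : Finite (Set.range g) := (Set.finite_range f).subset hsub
  exact Finite.of_injective_finite_range hg
end

section
/- Let p be a prime and Λ := ℤ_p⟦T⟧ the ring of formal power series over the p-adic integers. Let M be a finitely generated Λ-module, Z ⊆ M a Λ-submodule, and n₀ ≤ n natural numbers. For each m ≥ n₀ let ν_m ∈ Λ denote the unique element satisfying ν_m · ((1+T)^{p^{n₀}} − 1) = (1+T)^{p^m} − 1. Suppose that the quotient M/(T·M + ν_n·Z) is finite and that T·M + ν_{n+1}·Z = T·M + ν_n·Z as submodules of M (i.e. the natural surjection M/(T·M + ν_{n+1}·Z) → M/(T·M + ν_n·Z) is an isomorphism). Then ν_n·Z ⊆ T·M; consequently M/(T·M) is finite and the natural surjection M/(T·M) → M/(T·M + ν_n·Z) is an isomorphism. -/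
/-- Let `p` be a prime and `Λ = ℤ_p⟦T⟧`.  Let `M` be a finitely generated
`Λ`-module, `Z ⊆ M` a `Λ`-submodule, and `n₀ ≤ n` natural numbers.  For `m ≥ n₀` let
`ν_m ∈ Λ` be the unique element with `ν_m · ((1+T)^{p^{n₀}} - 1) = (1+T)^{p^m} - 1`.
If `M/(T·M + ν_n·Z)` is finite and `T·M + ν_{n+1}·Z = T·M + ν_n·Z`, then `ν_n·Z ⊆ T·M`;
consequently `M/(T·M)` is finite and the natural surjection
`M/(T·M) → M/(T·M + ν_n·Z)` is an isomorphism (i.e. `T·M + ν_n·Z = T·M`). -/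
theorem iwasawa_stabilization (p : ℕ) [Fact p.Prime]
    (M : Type*) [AddCommGroup M] [Module (PowerSeries ℤ_[p]) M]
    [Module.Finite (PowerSeries ℤ_[p]) M]
    (Z : Submodule (PowerSeries ℤ_[p]) M)
    (n₀ n : ℕ) (hn : n₀ ≤ n)
    -- the elements `ν_n` and `ν_{n+1}`
    (νn νn1 : PowerSeries ℤ_[p])
    (hνn : νn * ((1 + PowerSeries.X) ^ p ^ n₀ - 1) = (1 + PowerSeries.X) ^ p ^ n - 1)
    (hνn1 : νn1 * ((1 + PowerSeries.X) ^ p ^ n₀ - 1) =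
      (1 + PowerSeries.X) ^ p ^ (n + 1) - 1)
    -- the submodules `T·M`, `ν_n·Z` and `ν_{n+1}·Z`
    (TM : Submodule (PowerSeries ℤ_[p]) M)
    (hTM : TM = Submodule.map (LinearMap.lsmul (PowerSeries ℤ_[p]) M PowerSeries.X) ⊤)
    (Zn Zn1 : Submodule (PowerSeries ℤ_[p]) M)
    (hZn : Zn = Submodule.map (LinearMap.lsmul (PowerSeries ℤ_[p]) M νn) Z)
    (hZn1 : Zn1 = Submodule.map (LinearMap.lsmul (PowerSeries ℤ_[p]) M νn1) Z)
    -- the hypotheses: finiteness of `M/(T·M + ν_n·Z)` and stabilization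
    (hfin : Finite (M ⧸ (TM ⊔ Zn)))
    (hstab : TM ⊔ Zn1 = TM ⊔ Zn) :
    Zn ≤ TM ∧ Finite (M ⧸ TM) ∧ TM ⊔ Zn = TM := by
  have hne : ((1 + PowerSeries.X) ^ p ^ n₀ - 1 : PowerSeries ℤ_[p]) ≠ 0 := by
    intro h
    have h1 : ((1 + PowerSeries.X) ^ p ^ n₀ - 1 : PowerSeries ℤ_[p]) =
        (((1 + Polynomial.X) ^ p ^ n₀ - 1 : Polynomial ℤ_[p]) : PowerSeries ℤ_[p]) := by
      simp
    have h2 := congrArg (PowerSeries.coeff 1) (h1.symm.trans h)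
    rw [Polynomial.coeff_coe, Polynomial.coeff_sub, Polynomial.coeff_one_add_X_pow] at h2
    have hp := (Fact.out : p.Prime).ne_zero
    simp [Polynomial.coeff_one, hp] at h2
  obtain ⟨Φ, hΦ, hΦc⟩ : ∃ Φ : PowerSeries ℤ_[p], νn1 = Φ * νn ∧
      PowerSeries.constantCoeff Φ = (p : ℤ_[p]) := by
    refine ⟨∑ i ∈ Finset.range p, ((1 + PowerSeries.X) ^ p ^ n) ^ i, ?_, ?_⟩
    · apply mul_right_cancel₀ hne
      rw [hνn1, mul_assoc, hνn, geom_sum_mul, ← pow_mul, ← pow_succ]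
    · simp
  have hJ : Ideal.span {Φ} ≤ Ideal.jacobson ⊥ := by
    rw [IsLocalRing.jacobson_eq_maximalIdeal ⊥ bot_ne_top, Ideal.span_singleton_le_iff_mem,
      IsLocalRing.mem_maximalIdeal, mem_nonunits_iff, PowerSeries.isUnit_iff_constantCoeff, hΦc]
    exact PadicInt.prime_p.not_unit
  have hle : Zn ≤ TM := by
    refine Submodule.le_of_le_smul_of_le_jacobson_bot (IsNoetherian.noetherian Zn) hJ ?_
    refine le_sup_right.trans (hstab.symm.le.trans (sup_le_sup_left ?_ TM))
    rw [hZn1]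
    rintro _ ⟨z, hz, rfl⟩
    have : νn • z ∈ Zn := by rw [hZn]; exact ⟨z, hz, rfl⟩
    simp only [LinearMap.lsmul_apply, hΦ, mul_smul]
    exact Submodule.smul_mem_smul (Ideal.mem_span_singleton_self Φ) this
  have heq : TM ⊔ Zn = TM := sup_eq_left.mpr hle
  rw [heq] at hfin
  exact ⟨hle, hfin, heq⟩
end
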